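/- arXiv:1304.3822 — 4 statements merged into one kernel-verified Lean document; each statement's English description precedes it below -/
import Mathlib

section
/- Let σ ⊆ ℝⁿ be a closed convex cone and let Δ, Δ', Γ be polyhedra with tailcone σ (each of the form conv of a nonempty finite set plus σ). If Δ + Γ = Δ' + Γ (Minkowski sums), then Δ = Δ'. That is, the monoid of polyhedra with tailcone σ under Minkowski addition is cancellative. -/
open scoped Pointwise RealInnerProductSpace

/-!
Since `σ + σ = σ`, the hypothesis says that two closed convex sets agree after adding a bounded set
`B`. Rådström's argument cancels `B`: if `A + B ⊆ C + B` with `C` convex, then adding `A` repeatedly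
gives `k • A + B ⊆ k • C + B` for every `k ≥ 1`. Dividing by `k`, each point of `A` is a limit of
points of `C`, because `k⁻¹ • B` shrinks to `0`.
-/

section Algebra

variable {𝕜 E : Type*} [Field 𝕜] [LinearOrder 𝕜] [IsStrictOrderedRing 𝕜] [AddCommGroup E]
  [Module 𝕜 E]

theorem add_self_eq_self_of_convex_of_smul_mem {σ : Set E} (hconv : Convex 𝕜 σ)
    (hcone : ∀ x ∈ σ, ∀ t : 𝕜, 0 < t → t • x ∈ σ) : σ + σ = σ := by
  have two_smul_eq : (2 : 𝕜) • σ = σ := by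
    refine (Set.smul_set_subset_iff.2 fun x hx ↦ hcone x hx 2 two_pos).antisymm ?_
    rw [Set.subset_smul_set_iff₀ two_ne_zero, Set.smul_set_subset_iff]
    exact fun x hx ↦ hcone x hx 2⁻¹ (inv_pos.2 two_pos)
  calc σ + σ = (1 : 𝕜) • σ + (1 : 𝕜) • σ := by rw [one_smul]
    _ = (2 : 𝕜) • σ := by rw [← hconv.add_smul zero_le_one zero_le_one, one_add_one_eq_two]
    _ = σ := two_smul_eq

theorem natCast_add_one_smul_add_subset {A B C : Set E} (hC : Convex 𝕜 C)
    (h : A + B ⊆ C + B) (k : ℕ) :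
    ((k : 𝕜) + 1) • A + B ⊆ ((k : 𝕜) + 1) • C + B := by
  induction k with
  | zero => simpa only [Nat.cast_zero, zero_add, one_smul] using h
  | succ k ih =>
    rw [Nat.cast_succ]
    calc ((k : 𝕜) + 1 + 1) • A + B
        ⊆ ((k : 𝕜) + 1) • A + A + B := by
          gcongr
          simpa only [one_smul] using Set.add_smul_subset ((k : 𝕜) + 1) 1 A
      _ = ((k : 𝕜) + 1) • A + (A + B) := add_assoc _ _ _
      _ ⊆ ((k : 𝕜) + 1) • A + (C + B) := by gcongr
      _ = C + (((k : 𝕜) + 1) • A + B) := add_left_comm _ _ _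
      _ ⊆ C + (((k : 𝕜) + 1) • C + B) := by gcongr
      _ = ((k : 𝕜) + 1 + 1) • C + B := by
          rw [hC.add_smul (p := (k : 𝕜) + 1) (by positivity) zero_le_one, one_smul, ← add_assoc,
            add_comm C]

end Algebra

section Topology

variable {E : Type*} [AddCommGroup E] [Module ℝ E] [TopologicalSpace E] [IsTopologicalAddGroup E]

theorem subset_of_add_subset_add_right_of_isVonNBounded {A B C : Set E}
    (hB : Bornology.IsVonNBounded ℝ B) (hBne : B.Nonempty) (hCclosed : IsClosed C)
    (hC : Convex ℝ C) (h : A + B ⊆ C + B) : A ⊆ C := by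
  intro a ha
  obtain ⟨b, hb⟩ := hBne
  have telescope (k : ℕ) : ∃ c ∈ C, ∃ b' ∈ B,
      ((k : ℝ) + 1) • c + b' = ((k : ℝ) + 1) • a + b := by
    obtain ⟨_, ⟨c, hc, rfl⟩, b', hb', heq⟩ := natCast_add_one_smul_add_subset hC h k
      (Set.add_mem_add (Set.smul_mem_smul_set ha) hb)
    exact ⟨c, hc, b', hb', heq⟩
  choose c hc b' hb' heq using telescope
  have c_eq (k : ℕ) : a - (1 / ((k : ℝ) + 1)) • (b' k - b) = c k := by
    have hk : (k : ℝ) + 1 ≠ 0 := by positivity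
    rw [sub_eq_iff_eq_add, one_div, ← sub_eq_iff_eq_add', eq_inv_smul_iff₀ hk, smul_sub,
      sub_eq_sub_iff_add_eq_add, ← heq, add_comm]
  have error_tendsto : Filter.Tendsto (fun k : ℕ ↦ (1 / ((k : ℝ) + 1)) • (b' k - b))
      Filter.atTop (nhds 0) :=
    (hB.sub hB).smul_tendsto_zero (.of_forall fun k ↦ Set.sub_mem_sub (hb' k) hb)
      tendsto_one_div_add_atTop_nhds_zero_nat
  have c_tendsto : Filter.Tendsto c Filter.atTop (nhds a) := by
    simpa only [c_eq, sub_zero] using error_tendsto.const_sub a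
  exact hCclosed.mem_of_tendsto c_tendsto (.of_forall hc)

theorem eq_of_add_eq_add_right_of_isVonNBounded {A B C : Set E}
    (hB : Bornology.IsVonNBounded ℝ B) (hBne : B.Nonempty)
    (hAclosed : IsClosed A) (hA : Convex ℝ A) (hCclosed : IsClosed C) (hC : Convex ℝ C)
    (h : A + B = C + B) : A = C :=
  (subset_of_add_subset_add_right_of_isVonNBounded hB hBne hCclosed hC h.subset).antisymm
    (subset_of_add_subset_add_right_of_isVonNBounded hB hBne hAclosed hA h.superset)

theorem minkowski_addition_cancellative_general {σ K K' L : Set E}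
    (hclosed : IsClosed σ) (hconv : Convex ℝ σ)
    (hcone : ∀ x ∈ σ, ∀ t : ℝ, 0 < t → t • x ∈ σ)
    (hK : IsCompact K) (hKconv : Convex ℝ K) (hK' : IsCompact K') (hK'conv : Convex ℝ K')
    (hL : Bornology.IsVonNBounded ℝ L) (hLne : L.Nonempty)
    (hsum : (K + σ) + (L + σ) = (K' + σ) + (L + σ)) :
    K + σ = K' + σ := by
  have absorb_tailcone (M : Set E) : (M + σ) + (L + σ) = (M + σ) + L := by
    rw [add_add_add_comm, add_self_eq_self_of_convex_of_smul_mem hconv hcone, add_right_comm]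
  rw [absorb_tailcone, absorb_tailcone] at hsum
  exact eq_of_add_eq_add_right_of_isVonNBounded hL hLne
    (hclosed.add_left_of_isCompact hK) (hKconv.add hconv)
    (hclosed.add_left_of_isCompact hK') (hK'conv.add hconv) hsum

end Topology

theorem minkowski_addition_cancellative {n : ℕ} (hn : 1 ≤ n)
    (σ : Set (EuclideanSpace ℝ (Fin n)))
    (hclosed : IsClosed σ) (hconv : Convex ℝ σ)
    (hcone : ∀ x ∈ σ, ∀ t : ℝ, 0 < t → t • x ∈ σ)
    (hzero : (0 : EuclideanSpace ℝ (Fin n)) ∈ σ)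
    (V V' W : Finset (EuclideanSpace ℝ (Fin n)))
    (hV : V.Nonempty) (hV' : V'.Nonempty) (hW : W.Nonempty)
    (Δ Δ' Γ : Set (EuclideanSpace ℝ (Fin n)))
    (hΔ : Δ = convexHull ℝ (V : Set (EuclideanSpace ℝ (Fin n))) + σ)
    (hΔ' : Δ' = convexHull ℝ (V' : Set (EuclideanSpace ℝ (Fin n))) + σ)
    (hΓ : Γ = convexHull ℝ (W : Set (EuclideanSpace ℝ (Fin n))) + σ)
    (hsum : Δ + Γ = Δ' + Γ) :
    Δ = Δ' := by
  subst hΔ hΔ' hΓ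
  exact minkowski_addition_cancellative_general hclosed hconv hcone
    (V.finite_toSet.isCompact_convexHull ℝ) (convex_convexHull ℝ _)
    (V'.finite_toSet.isCompact_convexHull ℝ) (convex_convexHull ℝ _)
    ((W.finite_toSet.isCompact_convexHull ℝ).isVonNBounded ℝ) hW.to_set.convexHull hsum
end

section
/- Let σ ⊆ ℝⁿ be a pointed polyhedral cone (σ is the set of nonnegative combinations of finitely many vectors and σ ∩ (−σ) = {0}). Let h : σ^∨ → ℝ be a continuous function for which there exist finitely many polyhedral cones τ₁, …, τ_m with σ^∨ = τ₁ ∪ ⋯ ∪ τ_m and vectors v₁, …, v_m ∈ ℝⁿ with h(u) = ⟨v_i, u⟩ for all u ∈ τ_i. Then there exist nonempty finite sets V₁, V₂ ⊆ ℝⁿ such that h(u) = h_{conv(V₁)+σ}(u) − h_{conv(V₂)+σ}(u) for all u ∈ σ^∨, i.e. h is a difference of support functions of polyhedra with tailcone σ. -/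
open scoped Pointwise RealInnerProductSpace

/-- The support function `h_Δ(u) = inf_{v ∈ Δ} ⟨v, u⟩` of a subset `Δ ⊆ ℝⁿ`. -/
noncomputable def suppFn {n : ℕ} (Δ : Set (EuclideanSpace ℝ (Fin n)))
    (u : EuclideanSpace ℝ (Fin n)) : ℝ :=
  sInf ((fun x => ⟪x, u⟫) '' Δ)

/-!
Let `C = σ^∨`. Along a segment in `C` from `x` to `y`, the graph of `h` never rises above all the
pieces that start at or below `h x`: at a point where `h` switches to a piece starting above `h x`,
that piece has just crossed one starting at or below `h x`, and two lines cross only once. So for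
all `x, y ∈ C` some piece is at most `h` at `x` and at least `h` at `y`. Hence the minimum of the
pieces that are at least `h` at `y` agrees with `h` at `y` and is at most `h` on `C`, and `h` is the
maximum of these finitely many minima as `y` varies: `h` lies in the lattice generated by the linear
functionals. Minima of finitely many linear functionals are closed under sums and minima, so their
differences are closed under maxima because
`(a - b) ⊔ (c - d) = (a + c) - (b + c) ⊓ (a + d)`. Finally, on `σ^∨` such a minimum over `V` is the
support function of `conv V + σ`.
-/

open AffineMap Filter Set Topology

section LatticeOrderedGroup

variable {α : Type*} [Lattice α] [AddCommGroup α] [AddLeftMono α]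

theorem infClosure_add_infClosure_subset (s t : Set α) :
    infClosure s + infClosure t ⊆ infClosure (s + t) := by
  have add_mem_of_mem_right {b : α} (hb : b ∈ t) {a : α} (ha : a ∈ infClosure s) :
      a + b ∈ infClosure (s + t) :=
    infClosure_min (t := OrderIso.addRight b ⁻¹' infClosure (s + t))
      (fun _ ha ↦ subset_infClosure (add_mem_add ha hb)) (infClosed_infClosure.preimage _) ha
  refine add_subset_iff.2 fun a ha b hb ↦ ?_
  exact infClosure_min (t := OrderIso.addLeft a ⁻¹' infClosure (s + t))
    (fun _ hb ↦ add_mem_of_mem_right hb ha) (infClosed_infClosure.preimage _) hb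

theorem sub_sup_sub_eq (a b c d : α) :
    (a - b) ⊔ (c - d) = (a + c) - (b + c) ⊓ (a + d) := by
  rw [sub_eq_add_neg (a + c), neg_inf, add_sup]
  congr 1 <;> abel

theorem supClosed_sub_of_infClosed {s : Set α} (hinf : InfClosed s) (hadd : s + s ⊆ s) :
    SupClosed (s - s) := by
  rintro _ ⟨a, ha, b, hb, rfl⟩ _ ⟨c, hc, d, hd, rfl⟩
  have add_mem {x y : α} (hx : x ∈ s) (hy : y ∈ s) : x + y ∈ s := hadd (add_mem_add hx hy)
  exact ⟨a + c, add_mem ha hc, _, hinf (add_mem hb hc) (add_mem ha hd),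
    (sub_sup_sub_eq a b c d).symm⟩

theorem supClosure_subset_sub {s : Set α} (hzero : 0 ∈ s) (hinf : InfClosed s)
    (hadd : s + s ⊆ s) : supClosure s ⊆ s - s :=
  supClosure_min (fun a ha ↦ ⟨a, ha, 0, hzero, sub_zero a⟩) (supClosed_sub_of_infClosed hinf hadd)

end LatticeOrderedGroup

section ContinuousSelection

variable {ι : Type*} [Finite ι]

theorem exists_eq_and_frequently_eq_of_tendsto {X Y : Type*} [TopologicalSpace Y] [T2Space Y]
    {l : Filter X} [l.NeBot] {h : X → Y} {f : ι → X → Y} {y : Y} {z : ι → Y}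
    (hh : Tendsto h l (𝓝 y)) (hf : ∀ i, Tendsto (f i) l (𝓝 (z i)))
    (hsel : ∀ᶠ t in l, ∃ i, h t = f i t) : ∃ i, y = z i ∧ ∃ᶠ t in l, h t = f i t := by
  obtain ⟨i, hi⟩ : ∃ i, ∃ᶠ t in l, h t = f i t := by
    by_contra! hne
    obtain ⟨t, ⟨i, hi⟩, ht⟩ := (hsel.and (eventually_all.2 hne)).exists
    exact ht i hi
  exact ⟨i, tendsto_nhds_unique_of_frequently_eq hh (hf i) hi, hi⟩

theorem affineMap_le_of_lt_of_le {𝕜 : Type*} [Field 𝕜] [LinearOrder 𝕜] [IsStrictOrderedRing 𝕜]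
    {f g : 𝕜 →ᵃ[𝕜] 𝕜} {a s t : 𝕜} (has : a ≤ s) (hst : s ≤ t) (ha : g a < f a) (hs : f s ≤ g s) :
    f t ≤ g t := by
  by_contra! ht
  have hconvex : Convex 𝕜 {x | g x < f x} := by
    simpa [preimage] using (convex_Ioi (0 : 𝕜)).affine_preimage (f - g)
  exact hs.not_gt (hconvex.ordConnected.out ha ht ⟨has, hst⟩)

theorem exists_le_left_and_le_right_of_affine_selection {a b : ℝ} (hab : a ≤ b) {h : ℝ → ℝ}
    (hcont : ContinuousOn h (Icc a b)) {f : ι → ℝ →ᵃ[ℝ] ℝ}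
    (hsel : ∀ t ∈ Icc a b, ∃ i, h t = f i t) : ∃ i, f i a ≤ h a ∧ h b ≤ f i b := by
  let A : Set ℝ := ⋃ i ∈ {i | f i a ≤ h a}, {t | h t ≤ f i t}
  have mem_A {t : ℝ} : t ∈ A ↔ ∃ i, f i a ≤ h a ∧ h t ≤ f i t := by simp [A]
  have hf (i : ι) : Continuous (f i) := (f i).continuous_of_finiteDimensional
  suffices Icc a b ⊆ A from mem_A.1 (this (right_mem_Icc.2 hab))
  have hclosed : IsClosed (A ∩ Icc a b) := by
    rw [inter_comm, inter_iUnion₂]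
    exact (toFinite _).isClosed_biUnion fun i _ ↦
      isClosed_Icc.isClosed_le hcont (hf i).continuousOn
  have hleft : a ∈ A := by
    obtain ⟨i, hi⟩ := hsel a (left_mem_Icc.2 hab)
    exact mem_A.2 ⟨i, hi.ge, hi.le⟩
  refine hclosed.Icc_subset_of_forall_exists_gt hleft fun s ⟨hsA, hs⟩ y hy ↦ ?_
  obtain ⟨i, hia, his⟩ := mem_A.1 hsA
  have hIcc : Icc a b ∈ 𝓝[>] s := Icc_mem_nhdsGT_of_mem hs
  obtain ⟨j, hjs, hj⟩ := exists_eq_and_frequently_eq_of_tendsto (l := 𝓝[>] s)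
    ((hcont s (Ico_subset_Icc_self hs)).mono_of_mem_nhdsWithin hIcc)
    (fun i ↦ (hf i).continuousWithinAt) (eventually_of_mem hIcc hsel)
  obtain ⟨t, htj, ht⟩ := (hj.and_eventually (Ioc_mem_nhdsGT hy)).exists
  refine ⟨t, mem_A.2 ?_, ht⟩
  rcases le_or_gt (f j a) (h a) with hja | hja
  · exact ⟨j, hja, htj.le⟩
  · exact ⟨i, hia, htj.trans_le
      (affineMap_le_of_lt_of_le hs.1 ht.1.le (hia.trans_lt hja) (hjs.symm.trans_le his))⟩

variable {E : Type*} [AddCommGroup E] [Module ℝ E] [TopologicalSpace E] [ContinuousAdd E]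
  [ContinuousSMul ℝ E] {C : Set E} {h : E → ℝ} {f : ι → E →ᵃ[ℝ] ℝ}

theorem exists_le_and_ge_of_affine_selection (hC : Convex ℝ C) (hcont : ContinuousOn h C)
    (hsel : ∀ u ∈ C, ∃ i, h u = f i u) {x y : E} (hx : x ∈ C) (hy : y ∈ C) :
    ∃ i, f i x ≤ h x ∧ h y ≤ f i y := by
  have hseg : MapsTo (lineMap (k := ℝ) x y) (Icc 0 1) C := fun t ht ↦ hC.lineMap_mem hx hy ht
  have hline : Continuous (lineMap (k := ℝ) x y) := by
    simp only [coe_lineMap, vsub_eq_sub, vadd_eq_add]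
    fun_prop
  simpa using exists_le_left_and_le_right_of_affine_selection zero_le_one
    (hcont.comp hline.continuousOn hseg) (f := fun i ↦ (f i).comp (lineMap x y))
    (fun t ht ↦ hsel _ (hseg ht))

theorem exists_mem_infClosure_minorant (hC : Convex ℝ C) (hcont : ContinuousOn h C)
    (hsel : ∀ u ∈ C, ∃ i, h u = f i u) {y : E} (hy : y ∈ C) :
    ∃ p ∈ infClosure (range fun i ↦ ⇑(f i)), h y ≤ p y ∧ ∀ u ∈ C, p u ≤ h u := by
  classical
  cases nonempty_fintype ι
  let S : Finset ι := {i | h y ≤ f i y}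
  have hS : S.Nonempty := by
    obtain ⟨i, hi⟩ := hsel y hy
    exact ⟨i, by simp [S, hi.le]⟩
  refine ⟨S.inf' hS fun i ↦ ⇑(f i),
    finsetInf'_mem_infClosure hS fun i _ ↦ mem_range_self i, ?_, fun u hu ↦ ?_⟩
  · simp [S]
  · obtain ⟨i, hiu, hiy⟩ := exists_le_and_ge_of_affine_selection hC hcont hsel hu hy
    rw [Finset.inf'_apply]
    exact (Finset.inf'_le _ (by simpa [S] using hiy)).trans hiu

theorem exists_mem_latticeClosure_eqOn (hC : Convex ℝ C) (hne : C.Nonempty)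
    (hcont : ContinuousOn h C) (hsel : ∀ u ∈ C, ∃ i, h u = f i u) :
    ∃ F ∈ latticeClosure (range fun i ↦ ⇑(f i)), EqOn h F C := by
  rw [← supClosure_infClosure]
  let P : Set (E → ℝ) := {p ∈ infClosure (range fun i ↦ ⇑(f i)) | ∀ u ∈ C, p u ≤ h u}
  have hP : P.Finite := (finite_range _).infClosure.subset (sep_subset _ _)
  have exists_mem_P {y : E} (hy : y ∈ C) : ∃ p ∈ hP.toFinset, h y ≤ p y := by
    obtain ⟨p, hp, hyp, hle⟩ := exists_mem_infClosure_minorant hC hcont hsel hy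
    exact ⟨p, hP.mem_toFinset.2 ⟨hp, hle⟩, hyp⟩
  have hPne : hP.toFinset.Nonempty := (exists_mem_P hne.some_mem).imp fun _ ↦ And.left
  refine ⟨hP.toFinset.sup' hPne id,
    finsetSup'_mem_supClosure hPne fun p hp ↦ (hP.mem_toFinset.1 hp).1, fun u hu ↦ ?_⟩
  rw [Finset.sup'_apply]
  apply le_antisymm
  · obtain ⟨p, hp, hup⟩ := exists_mem_P hu
    exact hup.trans (Finset.le_sup' (fun p : E → ℝ ↦ p u) hp)
  · exact Finset.sup'_le _ _ fun p hp ↦ (hP.mem_toFinset.1 hp).2 u hu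

end ContinuousSelection

section SupportFunction

variable {E : Type*} [SeminormedAddCommGroup E] [InnerProductSpace ℝ E]

variable (E) in
/-- The functions `E → ℝ` that are minima of finitely many (at least one) linear functionals
`⟪v, ·⟫`; on `σ^∨` these are the support functions of the polyhedra with tailcone `σ`. -/
def minLinear : Set (E → ℝ) :=
  infClosure (range fun v u : E ↦ ⟪v, u⟫)

theorem exists_eq_inf'_of_mem_minLinear {F : E → ℝ} (hF : F ∈ minLinear E) :
    ∃ (V : Finset E) (hV : V.Nonempty), ∀ u, F u = V.inf' hV fun x ↦ ⟪x, u⟫ := by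
  classical
  obtain ⟨t, ht, hts, rfl⟩ := hF
  rw [← image_univ, Finset.subset_set_image_iff] at hts
  obtain ⟨V, -, rfl⟩ := hts
  exact ⟨V, Finset.image_nonempty.1 ht, fun u ↦ by simp [Finset.inf'_image, Finset.inf'_apply]⟩

theorem minLinear_add_subset : minLinear E + minLinear E ⊆ minLinear E := by
  refine (infClosure_add_infClosure_subset _ _).trans (infClosure_mono ?_)
  rintro _ ⟨_, ⟨v, rfl⟩, _, ⟨w, rfl⟩, rfl⟩
  exact ⟨v + w, funext fun u ↦ inner_add_left v w u⟩

theorem zero_mem_minLinear : 0 ∈ minLinear E :=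
  subset_infClosure ⟨0, funext fun u ↦ inner_zero_left u⟩

theorem latticeClosure_range_inner_subset_sub :
    latticeClosure (range fun v u : E ↦ ⟪v, u⟫) ⊆ minLinear E - minLinear E := by
  rw [← supClosure_infClosure]
  exact supClosure_subset_sub zero_mem_minLinear infClosed_infClosure minLinear_add_subset

theorem convex_setOf_forall_inner_nonneg (σ : Set E) : Convex ℝ {u : E | ∀ s ∈ σ, 0 ≤ ⟪u, s⟫} := by
  simp only [ofPred_forall]
  exact convex_iInter₂ fun s _ ↦ (convex_Ici 0).is_linear_preimage ((innerₗ E).flip s).isLinear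

/-- The support function `h_Δ(u) = inf_{v ∈ Δ} ⟨v, u⟩` of a subset `Δ` of a real inner product
space; `suppFn` is the case of `EuclideanSpace ℝ (Fin n)`. As there, the value is `0` where
`⟨·, u⟩` is unbounded below on `Δ`. -/
noncomputable def supportFn (Δ : Set E) (u : E) : ℝ :=
  sInf ((fun x ↦ ⟪x, u⟫) '' Δ)

theorem supportFn_convexHull_add {σ : Set E} (hzero : 0 ∈ σ) {V : Finset E} (hV : V.Nonempty)
    {u : E} (hu : ∀ s ∈ σ, 0 ≤ ⟪u, s⟫) :
    supportFn (convexHull ℝ (V : Set E) + σ) u = V.inf' hV fun x ↦ ⟪x, u⟫ := by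
  set r := V.inf' hV fun x ↦ ⟪x, u⟫ with hr
  refine IsLeast.csInf_eq ⟨?_, ?_⟩
  · obtain ⟨a, ha, har⟩ := V.exists_mem_eq_inf' hV fun x ↦ ⟪x, u⟫
    exact ⟨a, ⟨a, subset_convexHull ℝ _ ha, 0, hzero, add_zero a⟩, har.symm⟩
  · rintro _ ⟨_, ⟨x, hx, s, hs, rfl⟩, rfl⟩
    have hhalf : Convex ℝ {x : E | r ≤ ⟪x, u⟫} :=
      (convex_Ici r).is_linear_preimage ((innerₗ E).flip u).isLinear
    have hrx : r ≤ ⟪x, u⟫ := convexHull_min (fun y hy ↦ hr.trans_le (Finset.inf'_le _ hy)) hhalf hx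
    calc r ≤ ⟪x, u⟫ + ⟪u, s⟫ := le_add_of_le_of_nonneg hrx (hu s hs)
      _ = ⟪x + s, u⟫ := by rw [inner_add_left, real_inner_comm u s]

theorem piecewise_linear_is_difference_of_support_functions_general {σ : Set E} (hzero : 0 ∈ σ)
    {h : E → ℝ} (hcont : ContinuousOn h {u : E | ∀ s ∈ σ, 0 ≤ ⟪u, s⟫})
    {ι : Type*} [Finite ι] (v : ι → E)
    (hsel : ∀ u : E, (∀ s ∈ σ, 0 ≤ ⟪u, s⟫) → ∃ i, h u = ⟪v i, u⟫) :
    ∃ V₁ V₂ : Finset E, V₁.Nonempty ∧ V₂.Nonempty ∧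
      ∀ u : E, (∀ s ∈ σ, 0 ≤ ⟪u, s⟫) →
        h u = supportFn (convexHull ℝ (V₁ : Set E) + σ) u -
              supportFn (convexHull ℝ (V₂ : Set E) + σ) u := by
  obtain ⟨F, hF, hhF⟩ := exists_mem_latticeClosure_eqOn
    (f := fun i ↦ (innerₗ E (v i)).toAffineMap) (convex_setOf_forall_inner_nonneg σ)
    ⟨0, fun s _ ↦ (inner_zero_left s).ge⟩ hcont hsel
  have hrange : (range fun i ↦ ⇑(innerₗ E (v i)).toAffineMap) ⊆ range fun v u : E ↦ ⟪v, u⟫ :=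
    range_subset_iff.2 fun i ↦ ⟨v i, rfl⟩
  obtain ⟨A, hA, B, hB, rfl⟩ :=
    mem_sub.1 (latticeClosure_range_inner_subset_sub (latticeClosure_mono hrange hF))
  obtain ⟨V₁, hV₁, hAV₁⟩ := exists_eq_inf'_of_mem_minLinear hA
  obtain ⟨V₂, hV₂, hBV₂⟩ := exists_eq_inf'_of_mem_minLinear hB
  refine ⟨V₁, V₂, hV₁, hV₂, fun u hu ↦ ?_⟩
  rw [supportFn_convexHull_add hzero hV₁ hu, supportFn_convexHull_add hzero hV₂ hu, hhF hu,
    Pi.sub_apply, hAV₁ u, hBV₂ u]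

end SupportFunction

theorem piecewise_linear_is_difference_of_support_functions {n : ℕ} (hn : 1 ≤ n)
    (σ : Set (EuclideanSpace ℝ (Fin n)))
    (G : Finset (EuclideanSpace ℝ (Fin n)))
    (hσ : σ = {x | ∃ c : G → ℝ, (∀ g, 0 ≤ c g) ∧ x = ∑ g, c g • (g : EuclideanSpace ℝ (Fin n))})
    (hpointed : ∀ x ∈ σ, -x ∈ σ → x = 0)
    (m : ℕ) (τ : Fin m → Set (EuclideanSpace ℝ (Fin n)))
    (hτpoly : ∀ i, ∃ T : Finset (EuclideanSpace ℝ (Fin n)),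
      τ i = {x | ∃ c : T → ℝ, (∀ t, 0 ≤ c t) ∧ x = ∑ t, c t • (t : EuclideanSpace ℝ (Fin n))})
    (hcover : {u : EuclideanSpace ℝ (Fin n) | ∀ s ∈ σ, 0 ≤ ⟪u, s⟫} = ⋃ i, τ i)
    (h : EuclideanSpace ℝ (Fin n) → ℝ)
    (hcont : ContinuousOn h {u : EuclideanSpace ℝ (Fin n) | ∀ s ∈ σ, 0 ≤ ⟪u, s⟫})
    (v : Fin m → EuclideanSpace ℝ (Fin n))
    (hlin : ∀ i, ∀ u ∈ τ i, h u = ⟪v i, u⟫) :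
    ∃ V₁ V₂ : Finset (EuclideanSpace ℝ (Fin n)), V₁.Nonempty ∧ V₂.Nonempty ∧
      ∀ u : EuclideanSpace ℝ (Fin n), (∀ s ∈ σ, 0 ≤ ⟪u, s⟫) →
        h u = suppFn (convexHull ℝ (V₁ : Set (EuclideanSpace ℝ (Fin n))) + σ) u -
              suppFn (convexHull ℝ (V₂ : Set (EuclideanSpace ℝ (Fin n))) + σ) u := by
  exact piecewise_linear_is_difference_of_support_functions_general
    (hσ ▸ ⟨0, fun _ ↦ le_rfl, by simp⟩) hcont v
    fun u hu ↦ (mem_iUnion.1 (hcover.subset hu)).imp fun i ↦ hlin i u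
end

section
/- Let Σ be a finite collection of closed convex cones in ℝⁿ such that for all σ, τ ∈ Σ the intersection σ ∩ τ is an exposed face of σ and an exposed face of τ. Suppose u, v ∈ σ for some σ ∈ Σ and u + v ∈ τ for some τ ∈ Σ. Then u ∈ τ and v ∈ τ (and hence u, v, u + v all lie in the common cone σ ∩ τ). -/
open scoped Pointwise RealInnerProductSpace

/-!
If `u` and `v` lie in a convex cone `σ`, then `u + v` is the midpoint of `u` and `u + 2v`, two
points of `σ`. An exposed face of `σ` is extreme, so if it contains `u + v` then it contains `u`,
and by symmetry `v`. Apply this to the face `σ ∩ τ`.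
-/

section

variable {𝕜 E : Type*} [Ring 𝕜] [LinearOrder 𝕜] [IsStrictOrderedRing 𝕜] [Invertible (2 : 𝕜)]
  [AddCommGroup E] [Module 𝕜 E]

theorem add_mem_of_convex_of_two_smul_mem {s : Set E} (hconv : Convex 𝕜 s)
    (htwo : ∀ x ∈ s, (2 : 𝕜) • x ∈ s) {x y : E} (hx : x ∈ s) (hy : y ∈ s) : x + y ∈ s := by
  have hdouble : (2 : 𝕜) • midpoint 𝕜 x y = x + y := by rw [two_smul, midpoint_add_self]
  exact hdouble ▸ htwo _ (hconv.midpoint_mem hx hy)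

theorem left_mem_of_isExtreme_of_add_mem {C : AddSubsemigroup E} {B : Set E}
    (hB : IsExtreme 𝕜 (C : Set E) B) {u v : E} (hu : u ∈ C) (hv : v ∈ C) (huv : u + v ∈ B) :
    u ∈ B := by
  have hmid : u + v ∈ openSegment 𝕜 u (u + v + v) := by
    simpa only [add_sub_cancel_right] using mem_openSegment_sub_add (𝕜 := 𝕜) (u + v) v
  exact hB.left_mem_of_mem_openSegment hu (add_mem (add_mem hu hv) hv) huv hmid

theorem quasifan_sum_compatibility_general {σ : AddSubsemigroup E} {τ : Set E}
    (hface : IsExtreme 𝕜 (σ : Set E) (σ ∩ τ)) {u v : E} (hu : u ∈ σ) (hv : v ∈ σ)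
    (huv : u + v ∈ τ) : u ∈ (σ ∩ τ : Set E) ∧ v ∈ (σ ∩ τ : Set E) ∧ u + v ∈ (σ ∩ τ : Set E) := by
  have hmem : u + v ∈ (σ ∩ τ : Set E) := ⟨add_mem hu hv, huv⟩
  exact ⟨left_mem_of_isExtreme_of_add_mem hface hu hv hmem,
    left_mem_of_isExtreme_of_add_mem hface hv hu (add_comm u v ▸ hmem), hmem⟩

end

theorem quasifan_sum_compatibility {n : ℕ} (hn : 1 ≤ n)
    (S : Set (Set (EuclideanSpace ℝ (Fin n)))) (hfin : S.Finite)
    (hclosed : ∀ σ ∈ S, IsClosed σ)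
    (hconv : ∀ σ ∈ S, Convex ℝ σ)
    (hcone : ∀ σ ∈ S, ∀ x ∈ σ, ∀ t : ℝ, 0 < t → t • x ∈ σ)
    (hface : ∀ σ ∈ S, ∀ τ ∈ S, IsExposed ℝ σ (σ ∩ τ) ∧ IsExposed ℝ τ (σ ∩ τ))
    (σ τ : Set (EuclideanSpace ℝ (Fin n))) (hσ : σ ∈ S) (hτ : τ ∈ S)
    (u v : EuclideanSpace ℝ (Fin n)) (hu : u ∈ σ) (hv : v ∈ σ) (huv : u + v ∈ τ) :
    u ∈ σ ∩ τ ∧ v ∈ σ ∩ τ ∧ u + v ∈ σ ∩ τ := by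
  have hadd {x y} : x ∈ σ → y ∈ σ → x + y ∈ σ :=
    add_mem_of_convex_of_two_smul_mem (hconv σ hσ) fun x hx => hcone σ hσ x hx 2 two_pos
  exact quasifan_sum_compatibility_general (σ := ⟨σ, hadd⟩) (hface σ hσ τ hτ).1.isExtreme hu hv huv
end

section
/- Let Δ₁, …, Δ_k ⊆ ℝⁿ be finitely many polyhedra (each of the form conv(V_i) + σ_i with V_i a nonempty finite set and σ_i a polyhedral cone), each with nonempty interior, such that Δ₁ ∪ ⋯ ∪ Δ_k = ℝⁿ and for all i ≠ j the intersection Δ_i ∩ Δ_j is an exposed face of Δ_i and an exposed face of Δ_j. Let h : ℝⁿ → ℝ be continuous and suppose for each i there is an affine map g_i : ℝⁿ → ℝ with h(x) = g_i(x) for all x ∈ Δ_i. Then h is concave if and only if for every pair (i, j) such that the affine span of Δ_i ∩ Δ_j has dimension n − 1, there exists a point v ∈ Δ_j \ Δ_i with h(v) ≤ g_i(v). -/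
open scoped Pointwise RealInnerProductSpace

/-!
If `h` is concave, then `h - gᵢ` is concave and vanishes on the interior of `Δᵢ`, so each of these
zeros is a local, hence a global, maximum and `h ≤ gᵢ` everywhere.

Conversely, across a wall `W = Δᵢ ∩ Δⱼ` the map `gᵢ - gⱼ` vanishes on a hyperplane that has `Δⱼ` on
one side, so a single point of `Δⱼ \ W` determines its sign on all of `Δⱼ`. Hence `h` has an affine
majorant, exact at `p`, near each point `p` lying in no intersection of codimension at least two.
For fixed `y` and generic `x` the segment `[x, y]` consists of such points, except for its
endpoints. Along it `h` minus its chord cannot have a negative minimum, since at a local minimum a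
function with an exact affine majorant is locally constant. So `h` is concave along generic
segments, and along all segments by continuity.
-/

section PolyhedralCone

theorem mem_pointedConeHull_finset {𝕜 E : Type*} [Semiring 𝕜] [PartialOrder 𝕜] [IsOrderedRing 𝕜]
    [AddCommMonoid E] [Module 𝕜 E] {s : Finset E} {x : E} :
    x ∈ PointedCone.hull 𝕜 (s : Set E) ↔
      ∃ c : s → 𝕜, (∀ v, 0 ≤ c v) ∧ x = ∑ v, c v • (v : E) := by
  rw [PointedCone.hull, Submodule.mem_span_finset']
  constructor
  · rintro ⟨c, rfl⟩
    exact ⟨fun v ↦ c v, fun v ↦ (c v).2, rfl⟩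
  · rintro ⟨c, hc, rfl⟩
    exact ⟨fun v ↦ ⟨c v, hc v⟩, rfl⟩

theorem exists_mem_pointedConeHull_erase {𝕜 E : Type*} [Field 𝕜] [LinearOrder 𝕜]
    [IsStrictOrderedRing 𝕜] [AddCommGroup E] [Module 𝕜 E] [DecidableEq E] {s : Finset E}
    (hs : ¬LinearIndepOn 𝕜 id (s : Set E)) {x : E} (hx : x ∈ PointedCone.hull 𝕜 (s : Set E)) :
    ∃ v ∈ s, x ∈ PointedCone.hull 𝕜 (s.erase v : Set E) := by
  obtain ⟨c, hc, rfl⟩ := mem_pointedConeHull_finset.1 hx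
  obtain ⟨d, hd, v₀, hv₀⟩ : ∃ d : s → 𝕜, ∑ v, d v • (v : E) = 0 ∧ ∃ v, 0 < d v := by
    obtain ⟨d, hd, v₀, hv₀⟩ := Fintype.not_linearIndependent_iff.1 hs
    rcases hv₀.lt_or_gt with hneg | hpos
    · exact ⟨-d, by simpa using hd, v₀, by simpa using hneg⟩
    · exact ⟨d, hd, v₀, hpos⟩
  -- Subtract the largest multiple of the relation `d` that keeps all coefficients nonnegative.
  obtain ⟨m, hm, hmin⟩ := Finset.exists_min_image ({v | 0 < d v} : Finset s)
    (fun v ↦ c v / d v) ⟨v₀, by simpa using hv₀⟩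
  simp only [Finset.mem_filter_univ] at hm hmin
  set r := c m / d m
  have hr : 0 ≤ r := div_nonneg (hc m) hm.le
  have hnonneg (v : s) : 0 ≤ c v - r * d v := by
    rcases lt_or_ge 0 (d v) with hpos | hneg
    · exact sub_nonneg.2 ((le_div_iff₀ hpos).1 (hmin v hpos))
    · exact sub_nonneg.2 ((mul_nonpos_of_nonneg_of_nonpos hr hneg).trans (hc v))
  have hsum : ∑ v, c v • (v : E) = ∑ v, (c v - r * d v) • (v : E) := by
    simp only [sub_smul, mul_smul, Finset.sum_sub_distrib, ← Finset.smul_sum, hd, smul_zero,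
      sub_zero]
  refine ⟨m, m.2, hsum ▸ Submodule.sum_mem _ fun v _ ↦ ?_⟩
  by_cases hv : v = m
  · rw [hv, div_mul_cancel₀ _ hm.ne', sub_self, zero_smul]
    exact Submodule.zero_mem _
  · refine PointedCone.smul_mem _ (hnonneg v) (PointedCone.subset_hull ?_)
    exact Finset.mem_erase.2 ⟨fun h ↦ hv (Subtype.ext h), v.2⟩

variable {E : Type*} [AddCommGroup E] [TopologicalSpace E] [IsTopologicalAddGroup E] [Module ℝ E]
  [ContinuousSMul ℝ E] [T2Space E]

theorem isClosed_pointedConeHull_of_linearIndepOn {s : Finset E}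
    (hs : LinearIndepOn ℝ id (s : Set E)) :
    IsClosed (PointedCone.hull ℝ (s : Set E) : Set E) := by
  have hinj : Function.Injective (Fintype.linearCombination ℝ ((↑) : s → E)) :=
    linearIndependent_iff_injective_fintypeLinearCombination.1 hs
  have himage : (PointedCone.hull ℝ (s : Set E) : Set E) =
      Fintype.linearCombination ℝ ((↑) : s → E) '' Set.Ici 0 := by
    ext x
    simp only [SetLike.mem_coe, mem_pointedConeHull_finset, Set.mem_image, Set.mem_Ici,
      Pi.le_def, Pi.zero_apply, Fintype.linearCombination_apply, eq_comm]
  rw [himage]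
  exact (LinearMap.isClosedEmbedding_of_injective (LinearMap.ker_eq_bot.2 hinj)).isClosedMap _
    isClosed_Ici

theorem isClosed_pointedConeHull (s : Finset E) :
    IsClosed (PointedCone.hull ℝ (s : Set E) : Set E) := by
  classical
  induction s using Finset.strongInduction with
  | H s ih =>
    by_cases hs : LinearIndepOn ℝ id (s : Set E)
    · exact isClosed_pointedConeHull_of_linearIndepOn hs
    have hunion : (PointedCone.hull ℝ (s : Set E) : Set E) =
        ⋃ v ∈ s, (PointedCone.hull ℝ (s.erase v : Set E) : Set E) := by
      refine Set.Subset.antisymm (fun x hx ↦ ?_) (Set.iUnion₂_subset fun v _ ↦ ?_)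
      · simpa only [Set.mem_iUnion₂, exists_prop, SetLike.mem_coe] using
          exists_mem_pointedConeHull_erase hs hx
      · exact Submodule.span_mono (Finset.coe_subset.2 (s.erase_subset v))
    rw [hunion]
    exact s.finite_toSet.isClosed_biUnion fun v hv ↦ ih _ (Finset.erase_ssubset hv)

theorem isClosed_convexHull_add_pointedConeHull (V G : Finset E) :
    IsClosed (convexHull ℝ (V : Set E) + (PointedCone.hull ℝ (G : Set E) : Set E)) :=
  (isClosed_pointedConeHull G).add_left_of_isCompact
    (V.finite_toSet.isCompact_convexHull (𝕜 := ℝ))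

end PolyhedralCone

section AffineMajorant

open Set Filter Topology AffineMap

variable {E F : Type*} [AddCommGroup E] [Module ℝ E] [AddCommGroup F] [Module ℝ F]

theorem affineMap_convexOn_univ (g : E →ᵃ[ℝ] ℝ) : ConvexOn ℝ univ g :=
  (convexOn_id convex_univ).comp_affineMap g

variable [TopologicalSpace E] [TopologicalSpace F]

/-- `f` has an affine majorant near `p` that is exact at `p`, that is, a local supergradient;
the majorant is not required to be continuous. -/
def HasAffineMajorantAt (f : E → ℝ) (p : E) : Prop :=
  ∃ g : E →ᵃ[ℝ] ℝ, g p = f p ∧ ∀ᶠ x in 𝓝 p, f x ≤ g x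

namespace HasAffineMajorantAt

theorem comp_affineMap {f : F → ℝ} {u : E →ᵃ[ℝ] F} {p : E} (hu : ContinuousAt u p)
    (hf : HasAffineMajorantAt f (u p)) : HasAffineMajorantAt (f ∘ u) p :=
  let ⟨g, hgp, hg⟩ := hf
  ⟨g.comp u, hgp, hu.eventually hg⟩

theorem sub_affineMap {f : E → ℝ} {p : E} (hf : HasAffineMajorantAt f p) (u : E →ᵃ[ℝ] ℝ) :
    HasAffineMajorantAt (f - ⇑u) p :=
  let ⟨g, hgp, hg⟩ := hf
  ⟨g - u, by simp [hgp], hg.mono fun _ hx ↦ sub_le_sub_right hx _⟩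

variable [IsTopologicalAddGroup E] [ContinuousSMul ℝ E]

theorem eventually_eq_of_isLocalMin {f : E → ℝ} {p : E} (hf : HasAffineMajorantAt f p)
    (hmin : IsLocalMin f p) : ∀ᶠ x in 𝓝 p, f x = f p := by
  obtain ⟨g, hgp, hg⟩ := hf
  have hgmin : IsLocalMin g p := by
    filter_upwards [hmin, hg] with x hfx hgx using hgp.trans_le (hfx.trans hgx)
  have hge : ∀ x, g p ≤ g x :=
    IsMinOn.of_isLocalMin_of_convex_univ hgmin (affineMap_convexOn_univ g)
  have hle (x : E) : g x ≤ g p := by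
    have hreflect := hge (lineMap x p (2 : ℝ))
    rw [apply_lineMap, lineMap_apply_ring'] at hreflect
    linarith
  filter_upwards [hmin, hg] with x hfx hgx
  exact le_antisymm (hgx.trans ((hle x).trans hgp.le)) hfx

end HasAffineMajorantAt

theorem min_le_of_forall_hasAffineMajorantAt {f : ℝ → ℝ} {a b : ℝ}
    (hf : ContinuousOn f (Icc a b)) (hmaj : ∀ t ∈ Ioo a b, HasAffineMajorantAt f t)
    {t : ℝ} (ht : t ∈ Icc a b) : min (f a) (f b) ≤ f t := by
  obtain ⟨m, hm, hmin⟩ := isCompact_Icc.exists_isMinOn ⟨t, ht⟩ hf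
  refine le_trans ?_ (hmin ht)
  by_contra! hlt
  obtain ⟨hma, hmb⟩ := lt_min_iff.1 hlt
  have hclosed : IsClosed ({u | f u = f m} ∩ Icc m b) := by
    rw [inter_comm]
    exact (hf.mono (Icc_subset_Icc_left hm.1)).preimage_isClosed_of_isClosed isClosed_Icc
      isClosed_singleton
  have hsub : Icc m b ⊆ {u | f u = f m} := by
    refine hclosed.Icc_subset_of_forall_mem_nhdsWithin rfl fun u hu ↦ ?_
    have hfu : f u = f m := hu.1
    have hau : a ≠ u := by
      rintro rfl
      exact hma.ne' hfu
    have huab : u ∈ Ioo a b := ⟨lt_of_le_of_ne (hm.1.trans hu.2.1) hau, hu.2.2⟩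
    have humin : IsLocalMin f u := by
      filter_upwards [Icc_mem_nhds huab.1 huab.2] with w hw using hfu.trans_le (hmin hw)
    refine mem_nhdsWithin_of_mem_nhds ?_
    filter_upwards [(hmaj u huab).eventually_eq_of_isLocalMin humin] with w hw
    exact hw.trans hfu
  exact hmb.ne' (hsub (right_mem_Icc.2 hm.2))

variable [IsTopologicalAddGroup E] [ContinuousSMul ℝ E]

theorem lineMap_le_of_forall_hasAffineMajorantAt {f : E → ℝ} (hf : Continuous f) {x y : E}
    (hmaj : ∀ t ∈ Ioo (0 : ℝ) 1, HasAffineMajorantAt f (lineMap x y t)) {t : ℝ}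
    (ht : t ∈ Icc (0 : ℝ) 1) : lineMap (f x) (f y) t ≤ f (lineMap x y t) := by
  have hline : Continuous (lineMap x y : ℝ →ᵃ[ℝ] E) := lineMap_continuous
  have hchord : Continuous (lineMap (f x) (f y) : ℝ →ᵃ[ℝ] ℝ) := lineMap_continuous
  have hmin := min_le_of_forall_hasAffineMajorantAt
    (f := f ∘ (lineMap x y : ℝ →ᵃ[ℝ] E) - (lineMap (f x) (f y) : ℝ →ᵃ[ℝ] ℝ))
    ((hf.comp hline).sub hchord).continuousOn
    (fun u hu ↦ ((hmaj u hu).comp_affineMap hline.continuousAt).sub_affineMap _) ht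
  simpa using hmin

theorem concaveOn_univ_of_dense_hasAffineMajorantAt {f : E → ℝ} (hf : Continuous f)
    (hdense : ∀ y, Dense {x | ∀ t ∈ Ioo (0 : ℝ) 1, HasAffineMajorantAt f (lineMap x y t)}) :
    ConcaveOn ℝ univ f := by
  have hchord (x y : E) {t : ℝ} (ht : t ∈ Icc (0 : ℝ) 1) :
      lineMap (f x) (f y) t ≤ f (lineMap x y t) := by
    have hclosed : IsClosed {x | lineMap (f x) (f y) t ≤ f (lineMap x y t)} := by
      simp only [lineMap_apply_module]
      exact isClosed_le (by fun_prop) (by fun_prop)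
    refine hclosed.closure_subset_iff.2 (fun x hx ↦ ?_) (hdense y x)
    exact lineMap_le_of_forall_hasAffineMajorantAt hf hx ht
  refine ⟨convex_univ, fun x _ y _ a b ha hb hab ↦ ?_⟩
  obtain rfl : a = 1 - b := eq_sub_of_add_eq hab
  simpa only [lineMap_apply_module] using hchord x y ⟨hb, sub_nonneg.1 ha⟩

theorem le_affineMap_of_concaveOn_of_eqOn {f : E → ℝ} (hf : ConcaveOn ℝ univ f) {A : Set E}
    (hA : (interior A).Nonempty) {g : E →ᵃ[ℝ] ℝ} (hfg : EqOn f g A) (x : E) : f x ≤ g x := by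
  obtain ⟨p, hp⟩ := hA
  have hmax : IsLocalMax (f - ⇑g) p := by
    filter_upwards [mem_interior_iff_mem_nhds.1 hp] with z hz
    simp [hfg hz, hfg (interior_subset hp)]
  have hle := IsMaxOn.of_isLocalMax_of_convex_univ hmax (hf.sub (affineMap_convexOn_univ g)) x
  simpa [hfg (interior_subset hp)] using hle

end AffineMajorant

section Wall

open Set Module

variable {E : Type*} [AddCommGroup E] [Module ℝ E] [FiniteDimensional ℝ E]

theorem ker_eq_vectorSpan_of_finrank_add_one_eq {W : Set E}
    (hW : finrank ℝ (vectorSpan ℝ W) + 1 = finrank ℝ E) {l : E →ₗ[ℝ] ℝ} (hl : l ≠ 0)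
    (hconst : ∀ x ∈ W, ∀ y ∈ W, l x = l y) : LinearMap.ker l = vectorSpan ℝ W := by
  have hle : vectorSpan ℝ W ≤ LinearMap.ker l := by
    rw [vectorSpan_def, Submodule.span_le]
    rintro _ ⟨x, hx, y, hy, rfl⟩
    simpa [sub_eq_zero] using hconst x hx y hy
  have hker := Module.Dual.finrank_ker_add_one_of_ne_zero hl
  exact (Submodule.eq_of_le_of_finrank_le hle (by omega)).symm

variable [TopologicalSpace E]

theorem affineMap_le_of_isExposed_of_finrank_add_one_eq {A W : Set E} (hexp : IsExposed ℝ A W)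
    (hne : W.Nonempty) (hW : finrank ℝ (vectorSpan ℝ W) + 1 = finrank ℝ E) {f g : E →ᵃ[ℝ] ℝ}
    (hfg : EqOn f g W) {v : E} (hv : v ∈ A \ W) (hfgv : f v ≤ g v) {x : E} (hx : x ∈ A) :
    f x ≤ g x := by
  obtain ⟨l, hWl⟩ := hexp hne
  obtain ⟨p, hp⟩ := hne
  have hmax : ∀ y ∈ A, l y ≤ l p := (hWl ▸ hp).2
  have hlW : ∀ y ∈ W, l y = l p := fun y hy ↦
    le_antisymm (hmax y (hexp.subset hy)) ((hWl ▸ hy).2 p (hexp.subset hp))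
  have hlv : 0 < l (p - v) := by
    rw [map_sub, sub_pos]
    refine lt_of_le_of_ne (hmax v hv.1) fun heq ↦ hv.2 ?_
    rw [hWl]
    exact ⟨hv.1, fun y hy ↦ (hmax y hy).trans_eq heq.symm⟩
  have hker : LinearMap.ker (l : E →ₗ[ℝ] ℝ) = vectorSpan ℝ W :=
    ker_eq_vectorSpan_of_finrank_add_one_eq hW
      (fun hl0 ↦ hlv.ne' (LinearMap.congr_fun hl0 (p - v)))
      fun y hy z hz ↦ (hlW y hy).trans (hlW z hz).symm
  -- Modulo the hyperplane `ker l`, the vector `p - x` is a nonnegative multiple of `p - v`.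
  set c := l (p - x) / l (p - v)
  have hc : 0 ≤ c := div_nonneg (by simpa using hmax x hx) hlv.le
  have hmem : p - x - c • (p - v) ∈ vectorSpan ℝ W := by
    rw [← hker, LinearMap.mem_ker, ContinuousLinearMap.coe_coe, map_sub, map_smul, smul_eq_mul,
      div_mul_cancel₀ _ hlv.ne', sub_self]
  have hlin := AffineMap.linear_eqOn_vectorSpan hfg hmem
  simp only [map_sub, map_smul, smul_eq_mul] at hlin
  have hdiff (u : E →ᵃ[ℝ] ℝ) (y : E) : u.linear p - u.linear y = u p - u y := by
    rw [← map_sub]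
    exact u.linearMap_vsub p y
  rw [hdiff, hdiff, hdiff, hdiff, hfg hp] at hlin
  linarith [mul_le_mul_of_nonneg_left hfgv hc]

theorem affineMap_le_of_isExposed_of_finrank_le_add_one {A W : Set E} (hexp : IsExposed ℝ A W)
    (hne : W.Nonempty) (hW : finrank ℝ E ≤ finrank ℝ (vectorSpan ℝ W) + 1) {f g : E →ᵃ[ℝ] ℝ}
    (hfg : EqOn f g W)
    (hwall : finrank ℝ (vectorSpan ℝ W) + 1 = finrank ℝ E → ∃ v ∈ A \ W, f v ≤ g v) {x : E}
    (hx : x ∈ A) : f x ≤ g x := by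
  by_cases hdim : finrank ℝ (vectorSpan ℝ W) + 1 = finrank ℝ E
  · obtain ⟨v, hv, hfgv⟩ := hwall hdim
    exact affineMap_le_of_isExposed_of_finrank_add_one_eq hexp hne hdim hfg hv hfgv hx
  · have htop : vectorSpan ℝ W = ⊤ :=
      Submodule.eq_top_of_finrank_eq (le_antisymm (Submodule.finrank_le _) (by omega))
    rw [← AffineSubspace.affineSpan_eq_top_iff_vectorSpan_eq_top_of_nonempty ℝ E E hne] at htop
    rw [AffineMap.ext_on htop hfg]

end Wall

section Subdivision

open Set Filter Topology Module AffineMap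

theorem hasAffineMajorantAt_of_forall_cell_le {E ι : Type*} [AddCommGroup E] [Module ℝ E]
    [TopologicalSpace E] {Δ : ι → Set E} (hfin : LocallyFinite Δ) (hclosed : ∀ i, IsClosed (Δ i))
    (hcover : ⋃ i, Δ i = univ) {h : E → ℝ} {g : ι → E →ᵃ[ℝ] ℝ} (hg : ∀ i, EqOn h (g i) (Δ i))
    {p : E} {i : ι} (hi : p ∈ Δ i) (hle : ∀ j, p ∈ Δ j → ∀ x ∈ Δ j, g j x ≤ g i x) :
    HasAffineMajorantAt h p := by
  refine ⟨g i, (hg i hi).symm, ?_⟩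
  filter_upwards [hfin.eventually_subset hclosed p] with x hx
  obtain ⟨j, hj⟩ := iUnion_eq_univ_iff.1 hcover x
  exact (hg j hj).trans_le (hle j (hx hj) x hj)

variable {E ι : Type*} [NormedAddCommGroup E] [NormedSpace ℝ E]

theorem diff_nonempty_of_finrank_vectorSpan_inter_lt {A B : Set E} (hB : (interior B).Nonempty)
    (hdim : finrank ℝ (vectorSpan ℝ (A ∩ B)) < finrank ℝ E) : (B \ A).Nonempty := by
  rw [sdiff_nonempty]
  intro hsub
  have htop : affineSpan ℝ B = ⊤ :=
    affineSpan_eq_top_of_nonempty_interior (hB.mono (interior_mono (subset_convexHull ℝ B)))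
  rw [inter_eq_right.2 hsub, AffineSubspace.vectorSpan_eq_top_of_affineSpan_eq_top ℝ E E htop,
    finrank_top] at hdim
  exact hdim.false

variable [FiniteDimensional ℝ E]

theorem dense_setOf_forall_notMem_affineSubspace [Countable ι] {S : ι → AffineSubspace ℝ E}
    (hS : ∀ i, S i ≠ ⊤) : Dense {x | ∀ i, x ∉ S i} := by
  borelize E
  refine MeasureTheory.Measure.dense_of_ae (μ := MeasureTheory.Measure.addHaar) ?_
  rw [MeasureTheory.ae_all_iff]
  exact fun i ↦ MeasureTheory.compl_mem_ae_iff.2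
    (MeasureTheory.Measure.addHaar_affineSubspace _ (S i) (hS i))

theorem dense_setOf_forall_lineMap_notMem [Countable ι] {S : ι → Set E}
    (hS : ∀ i, finrank ℝ (vectorSpan ℝ (S i)) + 1 < finrank ℝ E) (y : E) :
    Dense {x | ∀ t : ℝ, t ≠ 1 → ∀ i, lineMap x y t ∉ S i} := by
  have hproper (i : ι) : affineSpan ℝ (insert y (S i)) ≠ ⊤ := by
    intro htop
    have hinsert := finrank_vectorSpan_insert_le_set ℝ (S i) y
    rw [AffineSubspace.vectorSpan_eq_top_of_affineSpan_eq_top ℝ E E htop, finrank_top] at hinsert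
    exact (hinsert.trans_lt (hS i)).false
  refine (dense_setOf_forall_notMem_affineSubspace hproper).mono fun x hx t ht i hmem ↦ ?_
  have hline : lineMap y (lineMap x y t) (1 - t)⁻¹ = x := by
    rw [lineMap_apply, lineMap_vsub_right, inv_smul_smul₀ (sub_ne_zero.2 ht.symm), vsub_vadd]
  refine hx i ?_
  rw [← hline]
  exact lineMap_mem _ (subset_affineSpan ℝ _ (mem_insert _ _))
    (subset_affineSpan ℝ _ (mem_insert_of_mem _ hmem))

theorem concaveOn_univ_of_forall_wall [Countable ι] {Δ : ι → Set E} (hfin : LocallyFinite Δ)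
    (hclosed : ∀ i, IsClosed (Δ i)) (hcover : ⋃ i, Δ i = univ)
    (hexp : ∀ i j, i ≠ j → IsExposed ℝ (Δ j) (Δ i ∩ Δ j)) {h : E → ℝ} {g : ι → E →ᵃ[ℝ] ℝ}
    (hg : ∀ i, EqOn h (g i) (Δ i))
    (hwall : ∀ i j, finrank ℝ (vectorSpan ℝ (Δ i ∩ Δ j)) + 1 = finrank ℝ E →
      ∃ v ∈ Δ j \ Δ i, h v ≤ g i v) :
    ConcaveOn ℝ univ h := by
  have hcont : Continuous h := hfin.continuous hcover hclosed fun i ↦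
    (g i).continuous_of_finiteDimensional.continuousOn.congr (hg i)
  refine concaveOn_univ_of_dense_hasAffineMajorantAt hcont fun y ↦ ?_
  let thin := {q : ι × ι // finrank ℝ (vectorSpan ℝ (Δ q.1 ∩ Δ q.2)) + 1 < finrank ℝ E}
  refine Dense.mono (fun x hx t ht ↦ ?_) (dense_setOf_forall_lineMap_notMem
    (S := fun q : thin ↦ Δ q.1.1 ∩ Δ q.1.2) (fun q ↦ q.2) y)
  obtain ⟨i, hi⟩ := iUnion_eq_univ_iff.1 hcover (lineMap x y t)
  refine hasAffineMajorantAt_of_forall_cell_le hfin hclosed hcover hg hi fun j hj z hz ↦ ?_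
  obtain rfl | hij := eq_or_ne i j
  · exact le_rfl
  have hcodim : finrank ℝ E ≤ finrank ℝ (vectorSpan ℝ (Δ i ∩ Δ j)) + 1 :=
    not_lt.1 fun hlt ↦ hx t ht.2.ne ⟨(i, j), hlt⟩ ⟨hi, hj⟩
  refine affineMap_le_of_isExposed_of_finrank_le_add_one (hexp i j hij) ⟨_, hi, hj⟩ hcodim
    (fun w hw ↦ (hg j hw.2).symm.trans (hg i hw.1)) (fun hdim ↦ ?_) hz
  obtain ⟨v, hv, hle⟩ := hwall i j hdim
  exact ⟨v, ⟨hv.1, fun hvW ↦ hv.2 hvW.1⟩, (hg j hv.1).symm.trans_le hle⟩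

theorem concavity_criterion_across_walls_general {Δ : ι → Set E} (hfin : LocallyFinite Δ)
    (hclosed : ∀ i, IsClosed (Δ i)) (hint : ∀ i, (interior (Δ i)).Nonempty)
    (hcover : ⋃ i, Δ i = univ) (hexp : ∀ i j, i ≠ j → IsExposed ℝ (Δ j) (Δ i ∩ Δ j))
    {h : E → ℝ} {g : ι → E →ᵃ[ℝ] ℝ} (hg : ∀ i, EqOn h (g i) (Δ i)) :
    ConcaveOn ℝ univ h ↔
      ∀ i j, finrank ℝ (affineSpan ℝ (Δ i ∩ Δ j)).direction + 1 = finrank ℝ E →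
        ∃ v ∈ Δ j \ Δ i, h v ≤ g i v := by
  have hdir (S : Set E) : finrank ℝ (affineSpan ℝ S).direction = finrank ℝ (vectorSpan ℝ S) := by
    rw [direction_affineSpan]
  simp only [hdir]
  constructor
  · intro hconc i j hdim
    obtain ⟨v, hv⟩ := diff_nonempty_of_finrank_vectorSpan_inter_lt (hint j)
      (Nat.lt_of_succ_le hdim.le)
    exact ⟨v, hv, le_affineMap_of_concaveOn_of_eqOn hconc (hint i) (hg i) v⟩
  · have : Countable ι :=
      countable_univ_iff.1 (hfin.countable_univ fun i ↦ (hint i).mono interior_subset)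
    exact concaveOn_univ_of_forall_wall hfin hclosed hcover hexp hg

end Subdivision

theorem concavity_criterion_across_walls {n : ℕ} (hn : 1 ≤ n)
    (k : ℕ) (Δ : Fin k → Set (EuclideanSpace ℝ (Fin n)))
    (hpoly : ∀ i, ∃ (V G : Finset (EuclideanSpace ℝ (Fin n))), V.Nonempty ∧
      Δ i = convexHull ℝ (V : Set (EuclideanSpace ℝ (Fin n))) +
        {x | ∃ c : G → ℝ, (∀ g, 0 ≤ c g) ∧ x = ∑ g, c g • (g : EuclideanSpace ℝ (Fin n))})
    (hint : ∀ i, (interior (Δ i)).Nonempty)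
    (hcover : ⋃ i, Δ i = Set.univ)
    (hface : ∀ i j, i ≠ j →
      IsExposed ℝ (Δ i) (Δ i ∩ Δ j) ∧ IsExposed ℝ (Δ j) (Δ i ∩ Δ j))
    (h : EuclideanSpace ℝ (Fin n) → ℝ) (hcont : Continuous h)
    (g : Fin k → (EuclideanSpace ℝ (Fin n) →ᵃ[ℝ] ℝ))
    (hg : ∀ i, ∀ x ∈ Δ i, h x = g i x) :
    ConcaveOn ℝ Set.univ h ↔
      ∀ i j, Module.finrank ℝ (affineSpan ℝ (Δ i ∩ Δ j)).direction = n - 1 →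
        ∃ v ∈ Δ j \ Δ i, h v ≤ g i v := by
  have hclosed (i : Fin k) : IsClosed (Δ i) := by
    obtain ⟨V, G, -, hVG⟩ := hpoly i
    simp only [hVG, ← mem_pointedConeHull_finset]
    exact isClosed_convexHull_add_pointedConeHull V G
  have hcodim (m : ℕ) : m = n - 1 ↔ m + 1 = n := by omega
  simpa only [hcodim, finrank_euclideanSpace_fin] using
    concavity_criterion_across_walls_general (locallyFinite_of_finite Δ) hclosed hint hcover
      (fun i j hij ↦ (hface i j hij).2) hg
end
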